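/- Let (X,d) be a compact geodesic metric space and f: X → ℝ a Lipschitz function. Then for every (x,t) ∈ X × (0,∞) one has |D Q_t f|(x) = D⁺(x,t)/t, and consequently for every x ∈ X the Hamilton–Jacobi equation (d/dt) Q_t f(x) + (1/2) |D Q_t f|²(x) = 0 holds for every t ∈ (0,∞) with at most countably many exceptions. -/

import Mathlib

open Filter Topology Set MeasureTheory
open scoped ENNReal NNReal

/-- Hopf-Lax semigroup: `Q_t f (x) = inf_y ( f y + d(x,y)^2 / (2t) )`, with `Q_0 f = f`. -/
noncomputable def HL {X : Type*} [MetricSpace X] (f : X → ℝ) (t : ℝ) (x : X) : ℝ :=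
  if t = 0 then f x else ⨅ y : X, (f y + dist x y ^ 2 / (2 * t))

/-- The set of minimizers of `y ↦ f y + d(x,y)^2/(2t)`. -/
def minSet {X : Type*} [MetricSpace X] (f : X → ℝ) (t : ℝ) (x : X) : Set X :=
  {y | ∀ z : X, f y + dist x y ^ 2 / (2 * t) ≤ f z + dist x z ^ 2 / (2 * t)}

/-- `D⁺(x,t)`: the largest distance from `x` to a minimizer of `y ↦ f y + d(x,y)^2/(2t)`,
with `D⁺(x,0) = 0`. -/
noncomputable def Dplus {X : Type*} [MetricSpace X] (f : X → ℝ) (x : X) (t : ℝ) : ℝ :=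
  if t = 0 then 0 else sSup (dist x '' minSet f t x)

/-- `D⁻(x,t)`: the smallest distance from `x` to a minimizer of `y ↦ f y + d(x,y)^2/(2t)`,
with `D⁻(x,0) = 0`. -/
noncomputable def Dminus {X : Type*} [MetricSpace X] (f : X → ℝ) (x : X) (t : ℝ) : ℝ :=
  if t = 0 then 0 else sInf (dist x '' minSet f t x)

/-- The slope (local Lipschitz constant) of `u` at `x`:
`|Du|(x) = limsup_{y→x} |u y - u x| / d(y,x)` (this `Real`-valued `limsup` is `0` at isolated
points, where the punctured neighborhood filter is trivial). -/
noncomputable def locSlope {X : Type*} [MetricSpace X] (u : X → ℝ) (x : X) : ℝ :=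
  limsup (fun y => |u y - u x| / dist y x) (𝓝[≠] x)

/-- A metric space is geodesic if any two points are joined by a constant speed geodesic
parametrized on `[0,1]`. -/
def IsGeodesicSpace (X : Type*) [MetricSpace X] : Prop :=
  ∀ x y : X, ∃ γ : ℝ → X, γ 0 = x ∧ γ 1 = y ∧
    ∀ s ∈ Icc (0 : ℝ) 1, ∀ t ∈ Icc (0 : ℝ) 1, dist (γ s) (γ t) = |s - t| * dist x y

/-!
If `z` minimizes `y ↦ f y + d(x₀,y)²/(2t)`, then `z` is a competitor for `Q_s f (x)`, so
`Q_s f (x) - Q_t f (x₀) ≤ d(x,z)²/(2s) - d(x₀,z)²/(2t)`. Both halves of the theorem come from this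
inequality.

For `s = t` it bounds the slope at `x₀` from above by `D⁺(x₀,t)/t`, since `D⁺(·,t)` is upper
semicontinuous. A geodesic from `x₀` to a farthest minimizer `z` contains points `x` arbitrarily
close to `x₀` with `d(x,z) = d(x₀,z) - d(x₀,x)`, along which the inequality is sharp to first order.

For `x = x₀` it gives `Q_s f (x) - Q_t f (x) ≤ D⁺(x,t)²/2 * (s⁻¹ - t⁻¹)`. Exchanging `s` and `t`
shows that `D⁺(x,·)` is nondecreasing, hence continuous off a countable set, and that `Q_t f (x)`
has derivative `-D⁺(x,t)²/(2t²)` in `t` wherever `D⁺(x,·)` is continuous.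
-/

lemma hasFDerivAt_of_sub_le_mul_sub {E : Type*} [NormedAddCommGroup E] [NormedSpace ℝ E]
    {u g φ : E → ℝ} {φ' : E →L[ℝ] ℝ} {t : E} (hg : ContinuousAt g t) (hφ : HasFDerivAt φ φ' t)
    (h_fwd : ∀ᶠ s in 𝓝 t, u s - u t ≤ g t * (φ s - φ t))
    (h_bwd : ∀ᶠ s in 𝓝 t, u t - u s ≤ g s * (φ t - φ s)) :
    HasFDerivAt u (g t • φ') t := by
  have h_rem : (fun s => u s - u t - g t * (φ s - φ t)) =O[𝓝 t]
      fun s => (g s - g t) * (φ s - φ t) := by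
    refine .of_bound 1 ?_
    filter_upwards [h_fwd, h_bwd] with s h₁ h₂
    rw [one_mul, Real.norm_eq_abs, Real.norm_eq_abs, abs_of_nonpos (by linarith)]
    exact le_trans (by linarith) (neg_le_abs _)
  have h_small : (fun s => g s - g t) =o[𝓝 t] fun _ => (1 : ℝ) :=
    (Asymptotics.isLittleO_one_iff ℝ).2 (tendsto_sub_nhds_zero_iff.2 hg)
  have h_prod : (fun s => (g s - g t) * (φ s - φ t)) =o[𝓝 t] fun s => s - t := by
    simpa only [one_mul, Asymptotics.isLittleO_norm_right] using
      h_small.mul_isBigO hφ.isBigO_sub.norm_right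
  refine .of_isLittleO (((h_rem.trans_isLittleO h_prod).add
    (hφ.isLittleO.const_mul_left (g t))).congr_left fun s => ?_)
  simp only [smul_apply, smul_eq_mul]
  ring

lemma bddBelow_range_of_lowerSemicontinuous {Y : Type*} [TopologicalSpace Y] [CompactSpace Y]
    {f : Y → ℝ} (hf : LowerSemicontinuous f) : BddBelow (range f) :=
  image_univ (f := f) ▸ (hf.lowerSemicontinuousOn univ).bddBelow_of_isCompact isCompact_univ

section HopfLax

variable {X : Type*} [MetricSpace X]

section Slope

variable {u : X → ℝ} {x : X} {c : ℝ}

lemma locSlope_le (hc : 0 ≤ c) (h : ∀ᶠ y in 𝓝[≠] x, |u y - u x| ≤ c * dist y x) :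
    locSlope u x ≤ c := by
  rcases (𝓝[≠] x).eq_or_neBot with hbot | _
  · simpa [locSlope, hbot, limsup, limsSup] using hc
  refine limsup_le_of_le (isCoboundedUnder_le_of_le _ (x := 0) fun y => by positivity) ?_
  filter_upwards [h, self_mem_nhdsWithin] with y hy hne
  exact (div_le_iff₀ (dist_pos.2 hne)).2 hy

lemma le_locSlope_of_frequently_le {C : ℝ} (hC : ∀ᶠ y in 𝓝[≠] x, |u y - u x| ≤ C * dist y x)
    (h : ∃ᶠ y in 𝓝[≠] x, c * dist y x ≤ |u y - u x|) : c ≤ locSlope u x := by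
  refine le_limsup_of_frequently_le ?_ (isBoundedUnder_of_eventually_le (a := C) ?_)
  · refine (h.and_eventually self_mem_nhdsWithin).mono fun y ⟨hy, hne⟩ => ?_
    exact (le_div_iff₀ (dist_pos.2 hne)).2 hy
  · filter_upwards [hC, self_mem_nhdsWithin] with y hy hne
    exact (div_le_iff₀ (dist_pos.2 hne)).2 hy

lemma locSlope_nonneg (u : X → ℝ) (x : X) : 0 ≤ locSlope u x := by
  rcases (𝓝[≠] x).eq_or_neBot with hbot | _
  · simp [locSlope, hbot, limsup, limsSup]
  rw [locSlope, limsup_eq]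
  refine Real.sInf_nonneg fun a (ha : ∀ᶠ y in 𝓝[≠] x, |u y - u x| / dist y x ≤ a) => ?_
  obtain ⟨y, hy⟩ := ha.exists
  exact le_trans (by positivity) hy

end Slope

lemma IsGeodesicSpace.frequently_dist_add_dist_eq (hgeo : IsGeodesicSpace X) {x z : X}
    (hxz : x ≠ z) : ∃ᶠ y in 𝓝[≠] x, dist y x + dist y z = dist x z := by
  obtain ⟨γ, hγ₀, hγ₁, hγ⟩ := hgeo x z
  have hD : 0 < dist x z := dist_pos.2 hxz
  refine (nhdsWithin_hasBasis Metric.nhds_basis_ball {x}ᶜ).frequently_iff.2 fun r hr => ?_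
  obtain ⟨s, hs₀, hs⟩ := exists_between (lt_min one_pos (div_pos hr hD))
  have hs₁ : s < 1 := hs.trans_le (min_le_left _ _)
  have hx : dist (γ s) x = s * dist x z := by
    simpa [hγ₀, abs_of_pos hs₀] using hγ s ⟨hs₀.le, hs₁.le⟩ 0 (by simp)
  have hz : dist (γ s) z = (1 - s) * dist x z := by
    simpa [hγ₁, abs_of_neg (sub_neg.2 hs₁)] using hγ s ⟨hs₀.le, hs₁.le⟩ 1 (by simp)
  refine ⟨γ s, ⟨?_, dist_pos.1 (hx ▸ mul_pos hs₀ hD)⟩, by rw [hx, hz]; ring⟩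
  rw [Metric.mem_ball, hx, ← lt_div_iff₀ hD]
  exact hs.trans_le (min_le_right _ _)

variable {f : X → ℝ} {s t : ℝ} {x y z : X}

lemma HL_eq_of_mem_minSet (ht : t ≠ 0) (hz : z ∈ minSet f t x) :
    HL f t x = f z + dist x z ^ 2 / (2 * t) := by
  rw [HL, if_neg ht]
  exact IsLeast.csInf_eq ⟨mem_range_self z, forall_mem_range.2 hz⟩

lemma HL_le (hf : BddBelow (range f)) (ht : 0 < t) (x z : X) :
    HL f t x ≤ f z + dist x z ^ 2 / (2 * t) := by
  obtain ⟨m, hm⟩ := hf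
  rw [HL, if_neg ht.ne']
  refine ciInf_le ⟨m, forall_mem_range.2 fun y => ?_⟩ z
  exact (hm (mem_range_self y)).trans (le_add_of_nonneg_right (by positivity))

lemma HL_sub_HL_le_of_mem_minSet (hf : BddBelow (range f)) (hs : 0 < s) (ht : t ≠ 0) (x : X)
    (hz : z ∈ minSet f t y) :
    HL f s x - HL f t y ≤ dist x z ^ 2 / (2 * s) - dist y z ^ 2 / (2 * t) := by
  rw [HL_eq_of_mem_minSet ht hz]
  linarith [HL_le hf hs x z]

lemma Dplus_nonneg (f : X → ℝ) (x : X) (t : ℝ) : 0 ≤ Dplus f x t := by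
  rw [Dplus]
  split_ifs
  · rfl
  · exact Real.sSup_nonneg (forall_mem_image.2 fun _ _ => dist_nonneg)

lemma dist_le_Dplus [BoundedSpace X] (ht : t ≠ 0) (hz : z ∈ minSet f t x) :
    dist x z ≤ Dplus f x t := by
  rw [Dplus, if_neg ht]
  obtain ⟨C, hC⟩ := Metric.boundedSpace_iff.1 ‹BoundedSpace X›
  exact le_csSup ⟨C, forall_mem_image.2 fun z _ => hC x z⟩ (mem_image_of_mem _ hz)

lemma isClosed_minSet_graph (hf : LowerSemicontinuous f) (t : ℝ) :
    IsClosed {p : X × X | p.2 ∈ minSet f t p.1} := by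
  have h_eq : {p : X × X | p.2 ∈ minSet f t p.1} = ⋂ z : X, {p : X × X |
      f p.2 + (dist p.1 p.2 ^ 2 / (2 * t) - dist p.1 z ^ 2 / (2 * t)) ≤ f z} := by
    ext p
    simp only [minSet, mem_ofPred_eq, mem_iInter, ← add_sub_assoc, sub_le_iff_le_add]
  rw [h_eq]
  refine isClosed_iInter fun z => LowerSemicontinuous.isClosed_preimage ?_ (f z)
  exact (hf.comp continuous_snd).add (Continuous.lowerSemicontinuous (by fun_prop))

variable [CompactSpace X]

lemma minSet_nonempty (hf : LowerSemicontinuous f) (t : ℝ) (x : X) : (minSet f t x).Nonempty := by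
  have h_lsc : LowerSemicontinuous fun y => f y + dist x y ^ 2 / (2 * t) :=
    hf.add (Continuous.lowerSemicontinuous (by fun_prop))
  obtain ⟨z, -, hz⟩ :=
    (h_lsc.lowerSemicontinuousOn univ).exists_isMinOn ⟨x, mem_univ x⟩ isCompact_univ
  exact ⟨z, fun y => hz (mem_univ y)⟩

lemma exists_mem_minSet_dist_eq_Dplus (hf : LowerSemicontinuous f) (ht : t ≠ 0) (x : X) :
    ∃ z ∈ minSet f t x, dist x z = Dplus f x t := by
  have h_closed : IsClosed (minSet f t x) :=
    (isClosed_minSet_graph hf t).preimage (Continuous.prodMk_right x)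
  rw [Dplus, if_neg ht]
  exact (h_closed.isCompact.image (by fun_prop)).sSup_mem ((minSet_nonempty hf t x).image _)

lemma upperSemicontinuous_Dplus (hf : LowerSemicontinuous f) (ht : t ≠ 0) :
    UpperSemicontinuous fun x => Dplus f x t := by
  refine upperSemicontinuous_iff_isClosed_preimage.2 fun c => ?_
  have h_closed : IsClosed ({p : X × X | p.2 ∈ minSet f t p.1} ∩ {p | c ≤ dist p.1 p.2}) :=
    (isClosed_minSet_graph hf t).inter (isClosed_le (by fun_prop) (by fun_prop))
  convert (h_closed.isCompact.image continuous_fst).isClosed using 1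
  ext x
  constructor
  · intro hx
    obtain ⟨z, hz, hd⟩ := exists_mem_minSet_dist_eq_Dplus hf ht x
    exact ⟨(x, z), ⟨hz, hx.trans_eq hd.symm⟩, rfl⟩
  · rintro ⟨⟨x, z⟩, ⟨hz, hc⟩, rfl⟩
    exact hc.trans (dist_le_Dplus ht hz)

lemma HL_sub_HL_le_mul_dist (hf : LowerSemicontinuous f) (ht : 0 < t) (x y : X) :
    HL f t x - HL f t y ≤ (Dplus f y t + dist x y / 2) / t * dist x y := by
  obtain ⟨z, hz, hd⟩ := exists_mem_minSet_dist_eq_Dplus hf ht.ne' y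
  calc HL f t x - HL f t y
      ≤ dist x z ^ 2 / (2 * t) - dist y z ^ 2 / (2 * t) :=
        HL_sub_HL_le_of_mem_minSet (bddBelow_range_of_lowerSemicontinuous hf) ht ht.ne' x hz
    _ ≤ (dist x y + dist y z) ^ 2 / (2 * t) - dist y z ^ 2 / (2 * t) := by
        gcongr
        exact dist_triangle x y z
    _ = (Dplus f y t + dist x y / 2) / t * dist x y := by
        rw [← hd]
        field

lemma eventually_abs_HL_sub_le (hf : LowerSemicontinuous f) (ht : 0 < t) {c : ℝ}
    (hc : Dplus f x t / t < c) : ∀ᶠ y in 𝓝 x, |HL f t y - HL f t x| ≤ c * dist y x := by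
  have h_usc : UpperSemicontinuous fun y => Dplus f y t + dist y x / 2 :=
    (upperSemicontinuous_Dplus hf ht.ne').add (Continuous.upperSemicontinuous (by fun_prop))
  have h_cont : Continuous fun y => Dplus f x t + dist y x / 2 := by fun_prop
  have hct : Dplus f x t + dist x x / 2 < c * t := by simpa [← div_lt_iff₀ ht] using hc
  filter_upwards [h_usc x (c * t) hct, h_cont.continuousAt.eventually_lt_const hct] with y hy hx
  rw [← div_lt_iff₀ ht] at hx hy
  refine abs_sub_le_iff.2 ⟨?_, ?_⟩
  · exact (HL_sub_HL_le_mul_dist hf ht y x).trans (by gcongr)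
  · rw [dist_comm y x] at hy ⊢
    exact (HL_sub_HL_le_mul_dist hf ht x y).trans (by gcongr)

lemma frequently_mul_dist_le_abs_HL_sub (hgeo : IsGeodesicSpace X) (hf : LowerSemicontinuous f)
    (ht : 0 < t) (hD : 0 < Dplus f x t) {c : ℝ} (hc : c < Dplus f x t / t) :
    ∃ᶠ y in 𝓝[≠] x, c * dist y x ≤ |HL f t y - HL f t x| := by
  obtain ⟨z, hz, hd⟩ := exists_mem_minSet_dist_eq_Dplus hf ht.ne' x
  rw [← hd] at hD hc
  have h_cont : Continuous fun y => (dist x z - dist y x / 2) / t := by fun_prop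
  have h_near : ∀ᶠ y in 𝓝[≠] x, c < (dist x z - dist y x / 2) / t :=
    (h_cont.continuousAt.eventually_const_lt (by simpa using hc)).filter_mono nhdsWithin_le_nhds
  refine ((hgeo.frequently_dist_add_dist_eq (dist_pos.1 hD)).and_eventually h_near).mono ?_
  rintro y ⟨hy, hcy⟩
  calc c * dist y x
      ≤ (dist x z - dist y x / 2) / t * dist y x := by gcongr
    _ = dist x z ^ 2 / (2 * t) - dist y z ^ 2 / (2 * t) := by
        rw [← hy]
        field
    _ ≤ HL f t x - HL f t y := by
        have hb := bddBelow_range_of_lowerSemicontinuous hf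
        linarith [HL_sub_HL_le_of_mem_minSet hb ht ht.ne' y hz]
    _ ≤ |HL f t y - HL f t x| := abs_sub_comm (HL f t x) _ ▸ le_abs_self _

theorem locSlope_HL (hgeo : IsGeodesicSpace X) (hf : LowerSemicontinuous f) (ht : 0 < t) (x : X) :
    locSlope (HL f t) x = Dplus f x t / t := by
  have h_upper {c : ℝ} (hc : Dplus f x t / t < c) :
      ∀ᶠ y in 𝓝[≠] x, |HL f t y - HL f t x| ≤ c * dist y x :=
    (eventually_abs_HL_sub_le hf ht hc).filter_mono nhdsWithin_le_nhds
  have h_nonneg : 0 ≤ Dplus f x t / t := div_nonneg (Dplus_nonneg f x t) ht.le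
  apply le_antisymm
  · refine le_of_forall_gt_imp_ge_of_dense fun c hc => ?_
    exact locSlope_le (h_nonneg.trans hc.le) (h_upper hc)
  rcases (Dplus_nonneg f x t).eq_or_lt with hD | hD
  · rw [← hD, zero_div]
    exact locSlope_nonneg _ _
  refine le_of_forall_lt_imp_le_of_dense fun c hc => ?_
  exact le_locSlope_of_frequently_le (h_upper (lt_add_one _))
    (frequently_mul_dist_le_abs_HL_sub hgeo hf ht hD hc)

lemma HL_sub_HL_le_mul_inv_sub_inv (hf : LowerSemicontinuous f) (hs : 0 < s) (ht : t ≠ 0) (x : X) :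
    HL f s x - HL f t x ≤ Dplus f x t ^ 2 / 2 * (s⁻¹ - t⁻¹) := by
  obtain ⟨z, hz, hd⟩ := exists_mem_minSet_dist_eq_Dplus hf ht x
  calc HL f s x - HL f t x
      ≤ dist x z ^ 2 / (2 * s) - dist x z ^ 2 / (2 * t) :=
        HL_sub_HL_le_of_mem_minSet (bddBelow_range_of_lowerSemicontinuous hf) hs ht x hz
    _ = Dplus f x t ^ 2 / 2 * (s⁻¹ - t⁻¹) := by
        rw [hd]
        field

lemma monotoneOn_Dplus (hf : LowerSemicontinuous f) (x : X) : MonotoneOn (Dplus f x) (Ioi 0) := by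
  intro s (hs : 0 < s) t (ht : 0 < t) hst
  rcases hst.eq_or_lt with rfl | hst
  · rfl
  have h_sum : 0 ≤ (Dplus f x t ^ 2 / 2 - Dplus f x s ^ 2 / 2) * (s⁻¹ - t⁻¹) := by
    linarith [HL_sub_HL_le_mul_inv_sub_inv hf hs ht.ne' x,
      HL_sub_HL_le_mul_inv_sub_inv hf ht hs.ne' x]
  have h_inv : 0 < s⁻¹ - t⁻¹ := sub_pos.2 (inv_strictAnti₀ hs hst)
  have h_sq := nonneg_of_mul_nonneg_left h_sum h_inv
  exact le_of_sq_le_sq (by linarith) (Dplus_nonneg f x t)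

theorem hasDerivAt_HL (hf : LowerSemicontinuous f) (ht : 0 < t)
    (hc : ContinuousAt (Dplus f x) t) :
    HasDerivAt (fun τ => HL f τ x) (-(1 / 2) * (Dplus f x t / t) ^ 2) t := by
  have h_pos : ∀ᶠ s in 𝓝 t, 0 < s := Ioi_mem_nhds ht
  have h_deriv := hasFDerivAt_of_sub_le_mul_sub (u := fun τ => HL f τ x)
    (g := fun τ => Dplus f x τ ^ 2 / 2) (by fun_prop) (hasDerivAt_inv ht.ne').hasFDerivAt
    (h_pos.mono fun s hs => HL_sub_HL_le_mul_inv_sub_inv hf hs ht.ne' x)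
    (h_pos.mono fun s hs => HL_sub_HL_le_mul_inv_sub_inv hf ht hs.ne' x)
  refine h_deriv.hasDerivAt.congr_deriv ?_
  simp only [smul_apply, ContinuousLinearMap.toSpanSingleton_apply, smul_eq_mul, one_mul]
  field

end HopfLax

theorem stmt5_general {X : Type*} [MetricSpace X] [CompactSpace X] (hgeo : IsGeodesicSpace X)
    (f : X → ℝ) (hf : LowerSemicontinuous f) :
    (∀ (x : X) (t : ℝ), 0 < t → locSlope (HL f t) x = Dplus f x t / t) ∧
    (∀ x : X, ∃ E : Set ℝ, E.Countable ∧ ∀ t ∈ Ioi (0 : ℝ), t ∉ E →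
      ∃ d : ℝ, HasDerivAt (fun τ : ℝ => HL f τ x) d t ∧
        d + (1 / 2) * (locSlope (HL f t) x) ^ 2 = 0) := by
  refine ⟨fun x t ht => locSlope_HL hgeo hf ht x, fun x =>
    ⟨_, (monotoneOn_Dplus hf x).countable_not_continuousWithinAt, fun t ht htE => ?_⟩⟩
  have h_cont : ContinuousWithinAt (Dplus f x) (Ioi 0) t := not_not.1 fun h => htE ⟨ht, h⟩
  refine ⟨_, hasDerivAt_HL hf ht (h_cont.continuousAt (Ioi_mem_nhds ht)), ?_⟩
  rw [locSlope_HL hgeo hf ht x]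
  ring

/-- **Supersolution of the Hamilton–Jacobi equation** (Theorem 3.6): if `(X,d)` is a compact
geodesic space and `f` is Lipschitz, then `|D Q_t f|(x) = D⁺(x,t)/t` for every
`(x,t) ∈ X × (0,∞)`; consequently for every `x`, at all `t ∈ (0,∞)` with at most countably
many exceptions the derivative `(d/dt) Q_t f (x)` exists and
`(d/dt) Q_t f (x) + ½ |D Q_t f|²(x) = 0`. -/
theorem stmt5 {X : Type*} [MetricSpace X] [CompactSpace X] [Nonempty X]
    (hgeo : IsGeodesicSpace X)
    (f : X → ℝ) (hf : ∃ K : ℝ≥0, LipschitzWith K f) :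
    (∀ (x : X) (t : ℝ), 0 < t → locSlope (HL f t) x = Dplus f x t / t) ∧
    (∀ x : X, ∃ E : Set ℝ, E.Countable ∧ ∀ t ∈ Ioi (0 : ℝ), t ∉ E →
      ∃ d : ℝ, HasDerivAt (fun τ : ℝ => HL f τ x) d t ∧
        d + (1 / 2) * (locSlope (HL f t) x) ^ 2 = 0) := by
  obtain ⟨K, hK⟩ := hf
  exact stmt5_general hgeo f hK.continuous.lowerSemicontinuous
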